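/- (Elliptic (N,N′)-soliton solution of the lattice KP equation.) The function w = ζ(ξ) − w₀ − nζ(δ) − mζ(ε) − hζ(λ) satisfies the lattice potential KP equation (ŵ̄ − w̃̄)·(w̄ − w̃) = (ŵ̄ − ŵ̃)·(ŵ − w̃) at every (n,m,h) ∈ ℤ³, where w̃, ŵ, w̄ denote w evaluated at (n+1,m,h), (n,m+1,h), (n,m,h+1), and ŵ̃, w̃̄, ŵ̄ at (n+1,m+1,h), (n+1,m,h+1), (n,m+1,h+1). -/

import Mathlib

open scoped BigOperators

noncomputable section

/-- A period lattice in `ℂ` spanned by two `ℝ`-independent periods. -/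
structure EllLattice where
  ω₁ : ℂ
  ω₂ : ℂ
  indep : ∀ a b : ℝ, a • ω₁ + b • ω₂ = 0 → a = 0 ∧ b = 0

namespace EllLattice

/-- Membership in the lattice `Λ = ℤω₁ + ℤω₂`. -/
def mem (L : EllLattice) (z : ℂ) : Prop := ∃ m n : ℤ, z = m • L.ω₁ + n • L.ω₂

/-- The lattice point with integer coordinates `p = (m, n)`. -/
def per (L : EllLattice) (p : ℤ × ℤ) : ℂ := p.1 • L.ω₁ + p.2 • L.ω₂

/-- The Weierstrass sigma function associated to the lattice, defined by its
Hadamard product over the nonzero lattice points. -/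
def sigma (L : EllLattice) (z : ℂ) : ℂ :=
  z * ∏' p : {p : ℤ × ℤ // p ≠ 0},
      ((1 - z / L.per p.1) *
        Complex.exp (z / L.per p.1 + z ^ 2 / (2 * (L.per p.1) ^ 2)))

/-- The Weierstrass zeta function `ζ = σ′/σ`. -/
def zeta (L : EllLattice) (z : ℂ) : ℂ := deriv L.sigma z / L.sigma z

/-- The Weierstrass `℘`-function `℘ = −ζ′`. -/
def wp (L : EllLattice) (z : ℂ) : ℂ := - deriv L.zeta z

/-- `Φ_ξ(κ) = σ(ξ+κ)/(σ(ξ)σ(κ))`. -/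
def Phi (L : EllLattice) (ξ κ : ℂ) : ℂ := L.sigma (ξ + κ) / (L.sigma ξ * L.sigma κ)

/-- The Lamé function `Ψ_ξ(κ) = Φ_ξ(κ)·e^{−ζ(ξ)κ}`. -/
def Psi (L : EllLattice) (ξ κ : ℂ) : ℂ := L.Phi ξ κ * Complex.exp (-(L.zeta ξ) * κ)

/-- `η_δ(ξ) = ζ(ξ+δ) − ζ(ξ) − ζ(δ)`. -/
def eta (L : EllLattice) (δ ξ : ℂ) : ℂ := L.zeta (ξ + δ) - L.zeta ξ - L.zeta δ

/-- `χ_{α,β}(ξ) = ζ(α) + ζ(β) + ζ(ξ) − ζ(ξ+α+β)`. -/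
def chi (L : EllLattice) (α β ξ : ℂ) : ℂ :=
  L.zeta α + L.zeta β + L.zeta ξ - L.zeta (ξ + α + β)

end EllLattice

open Matrix

/-- All the data entering the elliptic (N,N′)-soliton solutions of the lattice KP system:
a period lattice, lattice parameters `δ, ε, λ`, a base point `ξ₀`, rapidity parameters
`κ_i, κ′_j`, initial plane-wave constants `ρ⁰_i, ν⁰_j` and a constant `N′×N` matrix `C`. -/
structure KPData (N N' : ℕ) where
  L : EllLattice
  del : ℂ
  eps : ℂ
  lam : ℂ
  xi0 : ℂ
  κ : Fin N → ℂ
  κ' : Fin N' → ℂ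
  ρ0 : Fin N → ℂ
  ν0 : Fin N' → ℂ
  C : Matrix (Fin N') (Fin N) ℂ

namespace KPData

variable {N N' : ℕ}

/-- `ξ = ξ₀ + nδ + mε + hλ`. -/
def xi (D : KPData N N') (n m h : ℤ) : ℂ :=
  D.xi0 + n • D.del + m • D.eps + h • D.lam

/-- The plane-wave factor `ρ_i(n,m,h)`. -/
def ρ (D : KPData N N') (i : Fin N) (n m h : ℤ) : ℂ :=
  (Complex.exp (-(D.L.zeta D.del) * D.κ i) * D.L.Psi D.del (-(D.κ i))) ^ n *
  (Complex.exp (-(D.L.zeta D.eps) * D.κ i) * D.L.Psi D.eps (-(D.κ i))) ^ m *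
  (Complex.exp (-(D.L.zeta D.lam) * D.κ i) * D.L.Psi D.lam (-(D.κ i))) ^ h *
  Complex.exp (D.L.zeta (D.xi n m h) * D.κ i) * D.ρ0 i

/-- The plane-wave factor `ν_j(n,m,h)`. -/
def ν (D : KPData N N') (j : Fin N') (n m h : ℤ) : ℂ :=
  (Complex.exp (D.L.zeta D.del * D.κ' j) * D.L.Psi D.del (D.κ' j)) ^ (-n) *
  (Complex.exp (D.L.zeta D.eps * D.κ' j) * D.L.Psi D.eps (D.κ' j)) ^ (-m) *
  (Complex.exp (D.L.zeta D.lam * D.κ' j) * D.L.Psi D.lam (D.κ' j)) ^ (-h) *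
  Complex.exp (D.L.zeta (D.xi n m h) * D.κ' j) * D.ν0 j

/-- The dressed elliptic Cauchy matrix `M_{ij} = ρ_i Ψ_ξ(κ_i + κ′_j) ν_j`. -/
def M (D : KPData N N') (n m h : ℤ) : Matrix (Fin N) (Fin N') ℂ :=
  Matrix.of fun i j => D.ρ i n m h * D.L.Psi (D.xi n m h) (D.κ i + D.κ' j) * D.ν j n m h

/-- The column vector `r = (ρ_i Ψ_ξ(κ_i))_i`. -/
def r (D : KPData N N') (n m h : ℤ) : Fin N → ℂ :=
  fun i => D.ρ i n m h * D.L.Psi (D.xi n m h) (D.κ i)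

/-- The column vector `s = (ν_j Ψ_ξ(κ′_j))_j`. -/
def s (D : KPData N N') (n m h : ℤ) : Fin N' → ℂ :=
  fun j => D.ν j n m h * D.L.Psi (D.xi n m h) (D.κ' j)

/-- The τ-function `τ = det(1 + MC)`. -/
def τ (D : KPData N N') (n m h : ℤ) : ℂ := (1 + D.M n m h * D.C).det

/-- The diagonal matrix `χ_{α,K}(ξ) = diag(χ_{α,κ_i}(ξ))`. -/
def DK (D : KPData N N') (α : ℂ) (n m h : ℤ) : Matrix (Fin N) (Fin N) ℂ :=
  Matrix.diagonal fun i => D.L.chi α (D.κ i) (D.xi n m h)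

/-- The diagonal matrix `χ_{β,K′}(ξ) = diag(χ_{β,κ′_j}(ξ))`. -/
def DK' (D : KPData N N') (β : ℂ) (n m h : ℤ) : Matrix (Fin N') (Fin N') ℂ :=
  Matrix.diagonal fun j => D.L.chi β (D.κ' j) (D.xi n m h)

/-- `W_β = 1 − sᵀ (χ_{β,K′}(ξ))⁻¹ C (1+MC)⁻¹ r`. -/
def W (D : KPData N N') (β : ℂ) (n m h : ℤ) : ℂ :=
  1 - D.s n m h ⬝ᵥ ((D.DK' β n m h)⁻¹ *ᵥ (D.C *ᵥ ((1 + D.M n m h * D.C)⁻¹ *ᵥ D.r n m h)))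

/-- `V_α = 1 − sᵀ (1+CM)⁻¹ C (χ_{α,K}(ξ))⁻¹ r`. -/
def V (D : KPData N N') (α : ℂ) (n m h : ℤ) : ℂ :=
  1 - D.s n m h ⬝ᵥ ((1 + D.C * D.M n m h)⁻¹ *ᵥ (D.C *ᵥ ((D.DK α n m h)⁻¹ *ᵥ D.r n m h)))

/-- `w₀ = sᵀ C (1+MC)⁻¹ r`. -/
def w0 (D : KPData N N') (n m h : ℤ) : ℂ :=
  D.s n m h ⬝ᵥ (D.C *ᵥ ((1 + D.M n m h * D.C)⁻¹ *ᵥ D.r n m h))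

/-- `w = ζ(ξ) − w₀ − nζ(δ) − mζ(ε) − hζ(λ)`. -/
def w (D : KPData N N') (n m h : ℤ) : ℂ :=
  D.L.zeta (D.xi n m h) - D.w0 n m h - n • D.L.zeta D.del - m • D.L.zeta D.eps -
    h • D.L.zeta D.lam

/-- `S_{β,α} = sᵀ (χ_{β,K′}(ξ))⁻¹ C (1+MC)⁻¹ (χ_{α,K}(ξ))⁻¹ r`. -/
def S (D : KPData N N') (β α : ℂ) (n m h : ℤ) : ℂ :=
  D.s n m h ⬝ᵥ ((D.DK' β n m h)⁻¹ *ᵥ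
    (D.C *ᵥ ((1 + D.M n m h * D.C)⁻¹ *ᵥ ((D.DK α n m h)⁻¹ *ᵥ D.r n m h))))

/-- `u_α = (1+MC)⁻¹ (χ_{α,K}(ξ))⁻¹ r`. -/
def u (D : KPData N N') (α : ℂ) (n m h : ℤ) : Fin N → ℂ :=
  (1 + D.M n m h * D.C)⁻¹ *ᵥ ((D.DK α n m h)⁻¹ *ᵥ D.r n m h)

/-- `u₀ = (1+MC)⁻¹ r`. -/
def u0 (D : KPData N N') (n m h : ℤ) : Fin N → ℂ :=
  (1 + D.M n m h * D.C)⁻¹ *ᵥ D.r n m h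

/-- the adjoint (row) vector `ᵗu_β = sᵀ (χ_{β,K′}(ξ))⁻¹ (1+CM)⁻¹`. -/
def tu (D : KPData N N') (β : ℂ) (n m h : ℤ) : Fin N' → ℂ :=
  (D.s n m h ᵥ* (D.DK' β n m h)⁻¹) ᵥ* (1 + D.C * D.M n m h)⁻¹

/-- the adjoint (row) vector `ᵗu₀ = sᵀ (1+CM)⁻¹`. -/
def tu0 (D : KPData N N') (n m h : ℤ) : Fin N' → ℂ :=
  D.s n m h ᵥ* (1 + D.C * D.M n m h)⁻¹

/-- The gauge variable `𝒱_α = Φ_ξ(α)·V_α`. -/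
def calV (D : KPData N N') (α : ℂ) (n m h : ℤ) : ℂ :=
  D.L.Phi (D.xi n m h) α * D.V α n m h

/-- The gauge variable `𝒲_β = Φ_ξ(β)·W_β`. -/
def calW (D : KPData N N') (β : ℂ) (n m h : ℤ) : ℂ :=
  D.L.Phi (D.xi n m h) β * D.W β n m h

/-- The Schwarzian variable `Z_{β,α} = Φ_ξ(α+β)·(1 − χ_{α,β}(ξ)·S_{β,α})`. -/
def Z (D : KPData N N') (β α : ℂ) (n m h : ℤ) : ℂ :=
  D.L.Phi (D.xi n m h) (α + β) * (1 - D.L.chi α β (D.xi n m h) * D.S β α n m h)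

/-- Genericity of the parameters (together with finitely many auxiliary points `extra`):
no nontrivial integer combination of `ξ₀, δ, ε, λ`, the rapidity parameters and the
auxiliary points lies on the lattice.  In particular all arguments of `σ` occurring in
the soliton solutions and their shifts lie outside `Λ`. -/
def Generic {P : ℕ} (D : KPData N N') (extra : Fin P → ℂ) : Prop :=
  ∀ (c0 cn cm ch : ℤ) (a : Fin N → ℤ) (b : Fin N' → ℤ) (e : Fin P → ℤ),
    ¬ (c0 = 0 ∧ cn = 0 ∧ cm = 0 ∧ ch = 0 ∧ a = 0 ∧ b = 0 ∧ e = 0) →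
    ¬ D.L.mem (c0 • D.xi0 + cn • D.del + cm • D.eps + ch • D.lam +
      (∑ i, a i • D.κ i) + (∑ j, b j • D.κ' j) + ∑ t, e t • extra t)

end KPData

/-!
Write `x̃` for the shift of `x` by one of the three lattice steps, with parameter `d`. Under this
shift the dressed Cauchy matrix changes by the rank-one matrix `r s̃ᵀ`, while `r` and `s` turn into
combinations of themselves and of their multiples by `ζ(ξ+κ) - ζ(κ)`. These are instances of the
three-term identity of the sigma function and of its derivative in one rapidity at `0`. Evaluating
`sᵀ C ũ₀` in two ways gives potentials `A` and `B`, the same for all three steps, with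
`Ã + B = w w̃ + ℘(d)/2`; the part without solitons is the addition formula
`(ζ(x+y) - ζ(x) - ζ(y))² = ℘(x+y) + ℘(x) + ℘(y)`, a further limit of the three-term identity. In a
combination of this relation for the three steps `A` and `B` cancel, which leaves the lattice KP
equation.

The three-term identity follows from Liouville's theorem. By quasi-periodicity of `σ`, itself a
consequence of the periodicity of `℘ = -ζ'`, translating `x` by a period multiplies
`σ(x+y) σ(x-y)` by a factor independent of `y`. Quotients of linear combinations of such products
are therefore elliptic, and constant as soon as they are entire.
-/

section EntireFunctions

open Filter

theorem isBounded_range_of_periodic_span {ι E X : Type*} [Finite ι] [NormedAddCommGroup E]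
    [NormedSpace ℝ E] [PseudoMetricSpace X] (b : Module.Basis ι ℝ E) {f : E → X}
    (hf : Continuous f)
    (hper : ∀ l ∈ Submodule.span ℤ (Set.range b), Function.Periodic f l) :
    Bornology.IsBounded (Set.range f) := by
  have := Fintype.ofFinite ι
  have : FiniteDimensional ℝ E := b.finiteDimensional_of_finite
  have : ProperSpace E := FiniteDimensional.proper ℝ E
  refine ((ZSpan.fundamentalDomain_isBounded b).isCompact_closure.image hf).isBounded.subset ?_
  rintro _ ⟨z, rfl⟩
  refine ⟨ZSpan.fract b z, subset_closure (ZSpan.fract_mem_fundamentalDomain b z), ?_⟩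
  rw [ZSpan.fract_apply]
  exact (hper _ (ZSpan.floor b z).2).sub_eq z

theorem exists_differentiable_mul_eq {f g : ℂ → ℂ} (hf : Differentiable ℂ f)
    (hg : Differentiable ℂ g) (hzero : ∀ z, g z = 0 → f z = 0 ∧ deriv g z ≠ 0) :
    ∃ q : ℂ → ℂ, Differentiable ℂ q ∧ ∀ z, f z = q z * g z := by
  classical
  let q z := if g z = 0 then deriv f z / deriv g z else f z / g z
  refine ⟨q, fun z₀ => ?_, fun z => ?_⟩
  · by_cases hz₀ : g z₀ = 0
    · obtain ⟨hfz₀, hg'⟩ := hzero z₀ hz₀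
      have hdslope {h : ℂ → ℂ} (hh : Differentiable ℂ h) : DifferentiableAt ℂ (dslope h z₀) z₀ :=
        ((Complex.differentiableOn_dslope univ_mem).mpr hh.differentiableOn).differentiableAt
          univ_mem
      have hne : dslope g z₀ z₀ ≠ 0 := by rwa [dslope_same]
      refine ((hdslope hf).div (hdslope hg) hne).congr_of_eventuallyEq ?_
      filter_upwards [(hdslope hg).continuousAt.eventually_ne hne] with z hz
      rcases eq_or_ne z z₀ with rfl | hzz₀
      · simp [q, hz₀]
      · have hfz := sub_smul_dslope f z₀ z
        have hgz := sub_smul_dslope g z₀ z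
        rw [hfz₀, sub_zero, smul_eq_mul] at hfz
        rw [hz₀, sub_zero, smul_eq_mul] at hgz
        have hsub := sub_ne_zero.mpr hzz₀
        simp [q, ← hfz, ← hgz, hsub, hz, mul_div_mul_left]
    · refine ((hf z₀).div (hg z₀) hz₀).congr_of_eventuallyEq ?_
      filter_upwards [(hg z₀).continuousAt.eventually_ne hz₀] with z hz
      simp [q, hz]
  · by_cases hz : g z = 0
    · rw [hz, (hzero z hz).1, mul_zero]
    · simp [q, hz]

end EntireFunctions

section LatticeKP

variable {G R : Type*} [AddCommMonoid G] [CommRing R]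

theorem lattice_KP_of_add_eq_mul_add {w A B : G → R} {e₁ e₂ e₃ : G} {a₁ a₂ a₃ : R}
    (h₁ : ∀ p, A (p + e₁) + B p = w p * w (p + e₁) + a₁)
    (h₂ : ∀ p, A (p + e₂) + B p = w p * w (p + e₂) + a₂)
    (h₃ : ∀ p, A (p + e₃) + B p = w p * w (p + e₃) + a₃) (p : G) :
    (w (p + e₂ + e₃) - w (p + e₁ + e₃)) * (w (p + e₃) - w (p + e₁)) =
      (w (p + e₂ + e₃) - w (p + e₁ + e₂)) * (w (p + e₂) - w (p + e₁)) := by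
  have h₁₂ := h₁ (p + e₂)
  have h₁₃ := h₁ (p + e₃)
  have h₂₃ := h₂ (p + e₃)
  rw [add_right_comm] at h₁₂ h₁₃ h₂₃
  linear_combination h₂ (p + e₁) - h₁₂ + h₃ (p + e₂) - h₂₃ + h₁₃ - h₃ (p + e₁)

end LatticeKP

section RankOneUpdate

variable {ι R : Type*} [Fintype ι] [DecidableEq ι] [CommRing R]

/-- A form of the Sherman–Morrison formula that avoids dividing by `1 - y ⬝ᵥ (T⁻¹ *ᵥ r)`. -/
theorem inv_mulVec_of_eq_sub_vecMulVec {T T' : Matrix ι ι R} {r y : ι → R}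
    (hT : IsUnit T.det) (hT' : IsUnit T'.det) (h : T' = T - vecMulVec r y) (z : ι → R) :
    T'⁻¹ *ᵥ z = T⁻¹ *ᵥ z + (y ⬝ᵥ (T'⁻¹ *ᵥ z)) • (T⁻¹ *ᵥ r) := by
  have hz : T *ᵥ (T'⁻¹ *ᵥ z) = z + (y ⬝ᵥ (T'⁻¹ *ᵥ z)) • r := by
    rw [eq_add_of_sub_eq h.symm, add_mulVec, mulVec_mulVec, mul_nonsing_inv _ hT', one_mulVec,
      vecMulVec_mulVec, op_smul_eq_smul]
  rw [← mulVec_smul, ← mulVec_add, ← hz, mulVec_mulVec, nonsing_inv_mul _ hT, one_mulVec]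

end RankOneUpdate

namespace EllLattice

open Filter Topology

section SigmaFactor

/-- The Weierstrass primary factor with zero `l` and exponential correction of order two.
For `l = 0` it is constantly `1`, so that the product defining `σ` may run over all lattice
points. -/
def sigmaFactor (l z : ℂ) : ℂ := (1 - z / l) * Complex.exp (z / l + z ^ 2 / (2 * l ^ 2))

theorem sigmaFactor_zero_left (z : ℂ) : sigmaFactor 0 z = 1 := by simp [sigmaFactor]

theorem sigmaFactor_zero_right (l : ℂ) : sigmaFactor l 0 = 1 := by simp [sigmaFactor]

theorem sigmaFactor_neg_neg (l z : ℂ) : sigmaFactor (-l) (-z) = sigmaFactor l z := by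
  simp [sigmaFactor]

theorem differentiable_sigmaFactor (l : ℂ) : Differentiable ℂ (sigmaFactor l) := by
  unfold sigmaFactor
  fun_prop

theorem sigmaFactor_eq_zero_iff {l z : ℂ} : sigmaFactor l z = 0 ↔ z = l ∧ l ≠ 0 := by
  rcases eq_or_ne l 0 with rfl | hl
  · simp [sigmaFactor_zero_left]
  · simp [sigmaFactor, hl, sub_eq_zero, @eq_comm ℂ 1, div_eq_one_iff_eq hl]

/-- The primary factor is `exp (log (1 - u) - (-u - u ^ 2 / 2))`, a Taylor remainder of `log`. -/
theorem norm_one_sub_mul_exp_sub_one_le {u : ℂ} (hu : ‖u‖ ≤ 1 / 2) :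
    ‖(1 - u) * Complex.exp (u + u ^ 2 / 2) - 1‖ ≤ 2 * ‖u‖ ^ 3 := by
  set R := Complex.log (1 + -u) - Complex.logTaylor (2 + 1) (-u) with hR
  have hRu : ‖R‖ ≤ ‖u‖ ^ 3 := by
    have hlog := Complex.norm_log_sub_logTaylor_le 2 (z := -u) (by rw [norm_neg]; linarith)
    have hinv : (1 - ‖u‖)⁻¹ ≤ 2 := inv_le_of_inv_le₀ two_pos (by linarith)
    rw [norm_neg] at hlog
    calc ‖R‖ ≤ ‖u‖ ^ 3 * (1 - ‖u‖)⁻¹ / 3 := by convert hlog using 2; norm_num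
      _ ≤ ‖u‖ ^ 3 * 2 / 3 := by gcongr
      _ ≤ ‖u‖ ^ 3 := by nlinarith [pow_nonneg (norm_nonneg u) 3]
  have hexp : (1 - u) * Complex.exp (u + u ^ 2 / 2) = Complex.exp R := by
    have hu1 : 1 + -u ≠ 0 := fun h => by
      have : u = 1 := by linear_combination -h
      norm_num [this] at hu
    have : R = Complex.log (1 + -u) + (u + u ^ 2 / 2) := by
      rw [hR]
      simp [Complex.logTaylor, Finset.sum_range_succ]
      ring
    rw [this, Complex.exp_add (Complex.log _), Complex.exp_log hu1, sub_eq_add_neg]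
  rw [hexp]
  refine (Complex.norm_exp_sub_one_le (hRu.trans ?_)).trans (by gcongr)
  exact pow_le_one₀ (norm_nonneg u) (by linarith)

theorem norm_sigmaFactor_sub_one_le {l z : ℂ} (h : 2 * ‖z‖ ≤ ‖l‖) :
    ‖sigmaFactor l z - 1‖ ≤ 2 * ‖z‖ ^ 3 * ‖l‖ ^ (-3 : ℝ) := by
  rcases eq_or_ne l 0 with rfl | hl
  · simp only [sigmaFactor_zero_left, sub_self, norm_zero]
    positivity
  have hl' : 0 < ‖l‖ := norm_pos_iff.mpr hl
  have hu : ‖z / l‖ ≤ 1 / 2 := by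
    rw [norm_div, div_le_iff₀ hl']
    linarith
  have hfactor : sigmaFactor l z = (1 - z / l) * Complex.exp (z / l + (z / l) ^ 2 / 2) := by
    rw [sigmaFactor, div_pow, div_div, mul_comm (l ^ 2)]
  calc ‖sigmaFactor l z - 1‖ ≤ 2 * ‖z / l‖ ^ 3 :=
        hfactor ▸ norm_one_sub_mul_exp_sub_one_le hu
    _ = 2 * ‖z‖ ^ 3 * ‖l‖ ^ (-3 : ℝ) := by
        rw [Real.rpow_neg hl'.le, norm_div]
        norm_cast
        ring

theorem logDeriv_sigmaFactor {l z : ℂ} (hl : l ≠ 0) (hz : z ≠ l) :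
    logDeriv (sigmaFactor l) z = (z - l)⁻¹ + l⁻¹ + z / l ^ 2 := by
  have hzl : z - l ≠ 0 := sub_ne_zero.mpr hz
  have hlin : HasDerivAt (fun z : ℂ => 1 - z / l) (-(1 / l)) z := by
    simpa using ((hasDerivAt_id z).div_const l).const_sub 1
  have hexp : HasDerivAt (fun z : ℂ => z / l + z ^ 2 / (2 * l ^ 2)) (1 / l + z / l ^ 2) z := by
    convert! ((hasDerivAt_id z).div_const l).add
      ((hasDerivAt_pow 2 z).div_const (2 * l ^ 2)) using 1
    simp
    field_simp
  rw [logDeriv_apply, show deriv (sigmaFactor l) z = _ from (hlin.mul hexp.cexp).deriv, sigmaFactor,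
    show 1 - z / l = -(z - l) / l by field_simp; ring]
  have := Complex.exp_ne_zero (z / l + z ^ 2 / (2 * l ^ 2))
  field_simp
  ring

theorem hasDerivAt_logDeriv_sigmaFactor {l z : ℂ} (h : sigmaFactor l z ≠ 0) :
    HasDerivAt (logDeriv (sigmaFactor l))
      (-(if l = 0 then 0 else 1 / (z - l) ^ 2 - 1 / l ^ 2)) z := by
  rcases eq_or_ne l 0 with rfl | hl
  · have : sigmaFactor 0 = fun _ => 1 := funext sigmaFactor_zero_left
    simp [this]
  have hz : z ≠ l := fun hz => h (sigmaFactor_eq_zero_iff.mpr ⟨hz, hl⟩)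
  have hderiv : HasDerivAt (fun z => (z - l)⁻¹ + l⁻¹ + z / l ^ 2)
      (-(1 / (z - l) ^ 2 - 1 / l ^ 2)) z := by
    convert! ((((hasDerivAt_id z).sub_const l).inv (sub_ne_zero.mpr hz)).add_const l⁻¹).add
      ((hasDerivAt_id z).div_const (l ^ 2)) using 1
    simp
    ring
  rw [if_neg hl]
  refine hderiv.congr_of_eventuallyEq ?_
  filter_upwards [isOpen_ne.mem_nhds hz] with w hw using logDeriv_sigmaFactor hl hw

end SigmaFactor

section SigmaProd

variable (L : EllLattice)

/-- The lattice `L` as a period pair of the library's theory of elliptic functions. -/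
def periodPair : PeriodPair where
  ω₁ := L.ω₁
  ω₂ := L.ω₂
  indep := LinearIndependent.pair_iff.mpr L.indep

/-- The even entire function `σ(z) / z`, as a product over all lattice points. -/
def sigmaProd (z : ℂ) : ℂ := ∏' l : L.periodPair.lattice, sigmaFactor l z

theorem eventually_norm_sigmaFactor_sub_one_le (R : ℝ) :
    ∀ᶠ l : L.periodPair.lattice in cofinite, ∀ z ∈ Metric.closedBall (0 : ℂ) R,
      ‖sigmaFactor l z - 1‖ ≤ 2 * R ^ 3 * ‖(l : ℂ)‖ ^ (-3 : ℝ) := by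
  have hfin := isCompact_iff_finite.mp
    (isCompact_closedBall (0 : L.periodPair.lattice) (2 * R))
  filter_upwards [hfin.compl_mem_cofinite] with l hl z hz
  have hl : 2 * R < ‖(l : ℂ)‖ := by simpa using hl
  have hz : ‖z‖ ≤ R := by simpa using hz
  exact (norm_sigmaFactor_sub_one_le (by linarith)).trans (by gcongr)

theorem summable_norm_rpow_neg_three :
    Summable fun l : L.periodPair.lattice => ‖(l : ℂ)‖ ^ (-3 : ℝ) :=
  ZLattice.summable_norm_rpow _ _ (by simp; norm_num)

theorem hasProdLocallyUniformlyOn_sigmaProd :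
    HasProdLocallyUniformlyOn (fun (l : L.periodPair.lattice) z => sigmaFactor l z) L.sigmaProd
      Set.univ := by
  refine hasProdLocallyUniformlyOn_of_forall_compact isOpen_univ fun K _ hK => ?_
  obtain ⟨R, hR⟩ := hK.isBounded.subset_closedBall 0
  have := Summable.hasProdUniformlyOn_one_add (f := fun (l : L.periodPair.lattice) z =>
      sigmaFactor l z - 1) hK (L.summable_norm_rpow_neg_three.mul_left (2 * R ^ 3))
    (by filter_upwards [L.eventually_norm_sigmaFactor_sub_one_le R] with l hl z hz
          using hl z (hR hz))
    fun l => ((differentiable_sigmaFactor l).continuous.sub continuous_const).continuousOn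
  simpa only [add_sub_cancel] using! this

theorem differentiable_finsetProd_sigmaFactor (s : Finset L.periodPair.lattice) :
    Differentiable ℂ fun z => ∏ l ∈ s, sigmaFactor l z :=
  Differentiable.fun_finsetProd fun l _ => differentiable_sigmaFactor l

theorem differentiable_sigmaProd : Differentiable ℂ L.sigmaProd :=
  differentiableOn_univ.mp <| L.hasProdLocallyUniformlyOn_sigmaProd.differentiableOn
    (.of_forall fun s => (L.differentiable_finsetProd_sigmaFactor s).differentiableOn) isOpen_univ

theorem sigmaProd_zero : L.sigmaProd 0 = 1 := by simp [sigmaProd, sigmaFactor_zero_right]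

theorem sigmaProd_neg (z : ℂ) : L.sigmaProd (-z) = L.sigmaProd z := by
  unfold sigmaProd
  rw [← (Equiv.neg L.periodPair.lattice).tprod_eq]
  simp [sigmaFactor_neg_neg]

variable {L}

theorem sigmaFactor_ne_zero {z : ℂ} (hz : z ∈ ((L.periodPair.lattice : Set ℂ) \ {0})ᶜ)
    (l : L.periodPair.lattice) : sigmaFactor l z ≠ 0 := by
  rw [Ne, sigmaFactor_eq_zero_iff]
  rintro ⟨rfl, hl⟩
  exact hz ⟨l.2, hl⟩

theorem sigmaProd_eq_zero_iff {z : ℂ} :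
    L.sigmaProd z = 0 ↔ z ∈ (L.periodPair.lattice : Set ℂ) \ {0} := by
  refine ⟨fun h => ?_, fun h => tprod_of_exists_eq_zero
    ⟨⟨z, h.1⟩, sigmaFactor_eq_zero_iff.mpr ⟨rfl, h.2⟩⟩⟩
  by_contra hz
  refine tprod_one_add_ne_zero_of_summable
    (f := fun l : L.periodPair.lattice => sigmaFactor l z - 1)
    (fun l => by simpa only [add_sub_cancel] using sigmaFactor_ne_zero hz l) ?_
    (by simpa only [add_sub_cancel] using! h)
  refine Summable.of_norm_bounded_eventually
    (L.summable_norm_rpow_neg_three.mul_left (2 * ‖z‖ ^ 3)) ?_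
  filter_upwards [L.eventually_norm_sigmaFactor_sub_one_le ‖z‖] with l hl
  simpa using hl z (by simp)

theorem hasDerivAt_logDeriv_sigmaProd {z : ℂ}
    (hz : z ∈ ((L.periodPair.lattice : Set ℂ) \ {0})ᶜ) :
    HasDerivAt (logDeriv L.sigmaProd) (-L.periodPair.weierstrassPExcept 0 z) z := by
  have hsum := L.periodPair.hasSumLocallyUniformly_weierstrassPExcept 0
  rw [hasSumLocallyUniformly_iff_tendstoLocallyUniformly] at hsum
  refine hasDerivAt_of_tendstoLocallyUniformlyOn (l := atTop)
    (f := fun (s : Finset L.periodPair.lattice) z => ∑ l ∈ s, logDeriv (sigmaFactor l) z)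
    L.periodPair.isOpen_compl_lattice_sdiff
    (hsum.neg.tendstoLocallyUniformlyOn (s := ((L.periodPair.lattice : Set ℂ) \ {0})ᶜ))
    (.of_forall fun s x hx => ?_) (fun x hx => ?_) hz
  · convert! HasDerivAt.fun_sum (u := s)
      (fun l _ => hasDerivAt_logDeriv_sigmaFactor (sigmaFactor_ne_zero hx l)) using 1
    simp
  · have hprod := L.hasProdLocallyUniformlyOn_sigmaProd
    rw [hasProdLocallyUniformlyOn_iff_tendstoLocallyUniformlyOn] at hprod
    refine (Complex.logDeriv_tendsto isOpen_univ (Set.mem_univ x) hprod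
      (.of_forall fun s => (L.differentiable_finsetProd_sigmaFactor s).differentiableOn)
      (sigmaProd_eq_zero_iff.not.mpr hx)).congr fun s => ?_
    exact logDeriv_prod (fun l _ => sigmaFactor_ne_zero hx l)
      (fun l _ => differentiable_sigmaFactor l x)

end SigmaProd

variable (L : EllLattice)

section Sigma

theorem mem_iff_mem_lattice {z : ℂ} : L.mem z ↔ z ∈ L.periodPair.lattice := by
  simp only [PeriodPair.mem_lattice, mem, zsmul_eq_mul, periodPair, eq_comm]

theorem isOpen_setOf_not_mem : IsOpen {z | ¬ L.mem z} := by
  simpa only [mem_iff_mem_lattice] using! L.periodPair.isClosed_lattice.isOpen_compl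

theorem countable_setOf_mem : {z | L.mem z}.Countable := by
  have : Countable L.periodPair.lattice :=
    L.periodPair.latticeEquivProd.toEquiv.countable_iff.mpr inferInstance
  simpa only [mem_iff_mem_lattice] using! Set.to_countable (L.periodPair.lattice : Set ℂ)

theorem isPreconnected_setOf_not_mem : IsPreconnected {z | ¬ L.mem z} :=
  (L.countable_setOf_mem.isPathConnected_compl_of_one_lt_rank
    (by rw [Complex.rank_real_complex]; norm_num)).isConnected.isPreconnected

theorem sigma_eq_mul_sigmaProd (z : ℂ) : L.sigma z = z * L.sigmaProd z := by
  rw [sigma, sigmaProd, ← L.periodPair.latticeEquivProd.symm.toEquiv.tprod_eq]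
  have hper (p : ℤ × ℤ) : ((L.periodPair.latticeEquivProd.symm.toEquiv p :
      L.periodPair.lattice) : ℂ) = L.per p := by
    simpa only [per, zsmul_eq_mul] using! L.periodPair.latticeEquiv_symm_apply p
  simp_rw [hper]
  congr 1
  refine tprod_subtype_eq_of_mulSupport_subset (f := fun p => sigmaFactor (L.per p) z)
    (s := {p : ℤ × ℤ | p ≠ 0}) fun p hp hp0 => hp ?_
  simp [hp0, per, sigmaFactor_zero_left]

theorem differentiable_sigma : Differentiable ℂ L.sigma := by
  rw [funext L.sigma_eq_mul_sigmaProd]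
  exact differentiable_id.mul L.differentiable_sigmaProd

theorem sigma_neg (z : ℂ) : L.sigma (-z) = -L.sigma z := by
  simp [sigma_eq_mul_sigmaProd, sigmaProd_neg]

theorem sigma_zero : L.sigma 0 = 0 := by simp [sigma_eq_mul_sigmaProd]

theorem sigma_eq_zero_iff {z : ℂ} : L.sigma z = 0 ↔ L.mem z := by
  rw [sigma_eq_mul_sigmaProd, mul_eq_zero, sigmaProd_eq_zero_iff, mem_iff_mem_lattice]
  by_cases hz : z = 0 <;> simp [hz]

theorem mem_neg_iff {z : ℂ} : L.mem (-z) ↔ L.mem z := by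
  rw [← sigma_eq_zero_iff, sigma_neg, neg_eq_zero, sigma_eq_zero_iff]

theorem zeta_neg (z : ℂ) : L.zeta (-z) = -L.zeta z := by
  have : deriv L.sigma (-z) = deriv L.sigma z := by
    have := deriv_comp_neg L.sigma z
    simp only [sigma_neg, deriv.fun_neg] at this
    linear_combination this
  rw [zeta, this, sigma_neg, zeta, div_neg]

theorem contDiff_sigma : ContDiff ℂ ⊤ L.sigma := L.differentiable_sigma.contDiff

theorem hasDerivAt_iteratedDeriv_sigma (k : ℕ) (z : ℂ) :
    HasDerivAt (iteratedDeriv k L.sigma) (iteratedDeriv (k + 1) L.sigma z) z := by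
  rw [iteratedDeriv_succ]
  exact (L.contDiff_sigma.differentiable_iteratedDeriv k (by simp)).differentiableAt.hasDerivAt

theorem iteratedDeriv_succ_sigma_zero (k : ℕ) :
    iteratedDeriv (k + 1) L.sigma 0 = (k + 1) * iteratedDeriv k L.sigmaProd 0 := by
  rw [funext L.sigma_eq_mul_sigmaProd, iteratedDeriv_fun_mul contDiff_fun_id.contDiffAt
    L.differentiable_sigmaProd.contDiff.contDiffAt]
  simp [iteratedDeriv_fun_id_zero]

theorem iteratedDeriv_one_sigma_zero : iteratedDeriv 1 L.sigma 0 = 1 := by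
  simp [iteratedDeriv_succ_sigma_zero _ 0, sigmaProd_zero]

theorem deriv_sigmaProd_zero : deriv L.sigmaProd 0 = 0 := by
  have h := deriv_comp_neg L.sigmaProd 0
  simp only [sigmaProd_neg, neg_zero] at h
  linear_combination h / 2

theorem iteratedDeriv_two_sigma_zero : iteratedDeriv 2 L.sigma 0 = 0 := by
  simp [iteratedDeriv_succ_sigma_zero _ 1, iteratedDeriv_one, deriv_sigmaProd_zero]

/-- The quadratic terms in the exponents of the product make this Taylor coefficient vanish. -/
theorem iteratedDeriv_two_sigmaProd_zero : iteratedDeriv 2 L.sigmaProd 0 = 0 := by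
  have h0 : (0 : ℂ) ∈ ((L.periodPair.lattice : Set ℂ) \ {0})ᶜ := by simp
  have heq : deriv L.sigmaProd =ᶠ[𝓝 0] L.sigmaProd * logDeriv L.sigmaProd := by
    filter_upwards [L.periodPair.isOpen_compl_lattice_sdiff.mem_nhds h0] with z hz
    rw [Pi.mul_apply, logDeriv_apply, mul_div_cancel₀ _ (sigmaProd_eq_zero_iff.not.mpr hz)]
  rw [iteratedDeriv_succ, iteratedDeriv_one, heq.deriv_eq,
    ((L.differentiable_sigmaProd 0).hasDerivAt.mul (hasDerivAt_logDeriv_sigmaProd h0)).deriv]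
  simp [PeriodPair.weierstrassPExcept_zero, deriv_sigmaProd_zero]

theorem iteratedDeriv_three_sigma_zero : iteratedDeriv 3 L.sigma 0 = 0 := by
  rw [iteratedDeriv_succ_sigma_zero, iteratedDeriv_two_sigmaProd_zero, mul_zero]

theorem zeta_eq_inv_add_logDeriv_sigmaProd {z : ℂ} (hz : ¬ L.mem z) :
    L.zeta z = z⁻¹ + logDeriv L.sigmaProd z := by
  have hσ := L.sigma_eq_zero_iff.not.mpr hz
  rw [sigma_eq_mul_sigmaProd] at hσ
  rw [show L.zeta z = logDeriv L.sigma z from rfl, funext L.sigma_eq_mul_sigmaProd,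
    logDeriv_mul (f := fun z => z) z (left_ne_zero_of_mul hσ) (right_ne_zero_of_mul hσ)
    differentiableAt_fun_id (L.differentiable_sigmaProd z)]
  simp [logDeriv_apply]

theorem hasDerivAt_zeta {z : ℂ} (hz : ¬ L.mem z) :
    HasDerivAt L.zeta (-L.periodPair.weierstrassP z) z := by
  have hz0 : z ≠ 0 := by
    rintro rfl
    exact hz (L.sigma_eq_zero_iff.mp L.sigma_zero)
  have hzΛ : z ∈ ((L.periodPair.lattice : Set ℂ) \ {0})ᶜ :=
    fun h => hz (L.mem_iff_mem_lattice.mpr h.1)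
  have hderiv := (hasDerivAt_inv hz0).add (hasDerivAt_logDeriv_sigmaProd hzΛ)
  rw [← neg_add_rev, ← one_div] at hderiv
  have hP : L.periodPair.weierstrassP z = L.periodPair.weierstrassPExcept 0 z + 1 / z ^ 2 := by
    simpa using! (L.periodPair.weierstrassPExcept_add 0 z).symm
  rw [hP]
  refine hderiv.congr_of_eventuallyEq ?_
  filter_upwards [L.isOpen_setOf_not_mem.mem_nhds hz] with w hw
  exact L.zeta_eq_inv_add_logDeriv_sigmaProd hw

theorem mem_add_iff {z l : ℂ} (hl : L.mem l) : L.mem (z + l) ↔ L.mem z := by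
  rw [mem_iff_mem_lattice] at hl
  simp only [mem_iff_mem_lattice, Submodule.add_mem_iff_left _ hl]

theorem exists_zeta_add {l : ℂ} (hl : L.mem l) :
    ∃ η, ∀ z, ¬ L.mem z → L.zeta (z + l) = L.zeta z + η := by
  have hz (z : ℂ) (hz : ¬ L.mem z) := L.hasDerivAt_zeta hz
  have hzl (z : ℂ) (hz : ¬ L.mem z) :=
    (L.hasDerivAt_zeta ((L.mem_add_iff hl).not.mpr hz)).comp_add_const z l
  refine L.isOpen_setOf_not_mem.exists_eq_add_of_deriv_eq L.isPreconnected_setOf_not_mem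
    (fun z h => (hzl z h).differentiableAt.differentiableWithinAt)
    (fun z h => (hz z h).differentiableAt.differentiableWithinAt) fun z h => ?_
  rw [(hzl z h).deriv, (hz z h).deriv,
    L.periodPair.weierstrassP_add_coe z ⟨l, L.mem_iff_mem_lattice.mp hl⟩]

theorem exists_sigma_add {l : ℂ} (hl : L.mem l) :
    ∃ c η : ℂ, c ≠ 0 ∧ ∀ z, L.sigma (z + l) = c * Complex.exp (η * z) * L.sigma z := by
  obtain ⟨η, hη⟩ := L.exists_zeta_add hl
  have hσ {z : ℂ} (hz : ¬ L.mem z) : L.sigma z ≠ 0 := L.sigma_eq_zero_iff.not.mpr hz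
  have hexp (z : ℂ) : HasDerivAt (fun z => Complex.exp (η * z)) (Complex.exp (η * z) * η) z := by
    simpa using ((hasDerivAt_id z).const_mul η).cexp
  have hlogDeriv : Set.EqOn (logDeriv fun z => L.sigma (z + l))
      (logDeriv fun z => Complex.exp (η * z) * L.sigma z) {z | ¬ L.mem z} := fun z hz => by
    calc logDeriv (fun z => L.sigma (z + l)) z = L.zeta (z + l) := by
          rw [logDeriv_apply, deriv_comp_add_const, zeta]
      _ = η + L.zeta z := by rw [hη z hz, add_comm]
      _ = logDeriv (fun z => Complex.exp (η * z) * L.sigma z) z := by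
          rw [logDeriv_mul (f := fun z => Complex.exp (η * z)) z (Complex.exp_ne_zero _) (hσ hz)
            (hexp z).differentiableAt (L.differentiable_sigma z), logDeriv_apply, (hexp z).deriv,
            mul_div_cancel_left₀ _ (Complex.exp_ne_zero _), logDeriv_apply, zeta]
  obtain ⟨c, hc, heq⟩ := (logDeriv_eqOn_iff
    (L.differentiable_sigma.comp (differentiable_id.add_const l)).differentiableOn
    (fun z _ => ((hexp z).differentiableAt.mul
      (L.differentiable_sigma z)).differentiableWithinAt)
    L.isOpen_setOf_not_mem L.isPreconnected_setOf_not_mem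
    (fun z hz => mul_ne_zero (Complex.exp_ne_zero _) (hσ hz))
    (fun z hz => hσ ((L.mem_add_iff hl).not.mpr hz))).mp hlogDeriv
  refine ⟨c, η, hc, fun z => ?_⟩
  by_cases hz : L.mem z
  · rw [L.sigma_eq_zero_iff.mpr hz, L.sigma_eq_zero_iff.mpr ((L.mem_add_iff hl).mpr hz), mul_zero]
  · simpa [mul_assoc] using heq hz

theorem deriv_sigma_ne_zero {z : ℂ} (hz : L.sigma z = 0) : deriv L.sigma z ≠ 0 := by
  obtain ⟨c, η, hc, h⟩ := L.exists_sigma_add (L.sigma_eq_zero_iff.mp hz)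
  have hderiv : HasDerivAt (fun w => c * Complex.exp (η * w) * L.sigma w) c 0 := by
    convert! (((hasDerivAt_id (0 : ℂ)).const_mul η).cexp.const_mul c).mul
      (L.hasDerivAt_iteratedDeriv_sigma 0 0) using 1
    simp [sigma_zero, iteratedDeriv_one_sigma_zero]
  have := deriv_comp_add_const L.sigma z 0
  rw [funext h, hderiv.deriv, zero_add] at this
  rwa [← this]

end Sigma

section Liouville

/-- The quotient `f / g` is entire and elliptic, hence constant by Liouville's theorem. -/
theorem exists_eq_const_mul_of_add_eq_mul {f g : ℂ → ℂ} (hf : Differentiable ℂ f)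
    (hg : Differentiable ℂ g) (hzero : ∀ z, g z = 0 → f z = 0 ∧ deriv g z ≠ 0)
    (hmul : ∀ l, L.mem l → ∃ m : ℂ → ℂ, ∀ z, f (z + l) = m z * f z ∧ g (z + l) = m z * g z) :
    ∃ c, ∀ z, f z = c * g z := by
  obtain ⟨q, hq, hfq⟩ := exists_differentiable_mul_eq hf hg hzero
  have hshift {h : ℂ → ℂ} (hh : Differentiable ℂ h) (l : ℂ) :
      Differentiable ℂ fun z => h (z + l) := hh.comp (differentiable_id.add_const l)
  have hper : ∀ l, L.mem l → Function.Periodic q l := fun l hl z => by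
    obtain ⟨m, hm⟩ := hmul l hl
    have hanalytic {h : ℂ → ℂ} (hh : Differentiable ℂ h) : AnalyticOnNhd ℂ h Set.univ :=
      hh.differentiableOn.analyticOnNhd isOpen_univ
    rcases AnalyticOnNhd.eq_zero_or_eq_zero_of_mul_eq_zero (hanalytic ((hshift hq l).sub hq))
      (hanalytic (hshift hg l)) (fun z _ => by
        have := (hm z).1
        rw [hfq, hfq] at this
        simp only [Pi.sub_apply]
        linear_combination this - q z * (hm z).2) isPreconnected_univ with h | h
    · exact sub_eq_zero.mp (h z trivial)
    · have hg0 : g = 0 := funext fun z => by simpa using h (z - l) trivial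
      exact absurd (by simp [hg0]) (hzero 0 (by simp [hg0])).2
  have hbdd := isBounded_range_of_periodic_span L.periodPair.basis hq.continuous fun l hl =>
    hper l (L.mem_iff_mem_lattice.mpr (L.periodPair.lattice_eq_span_range_basis ▸ hl))
  exact ⟨q 0, fun z => by rw [hfq, hq.apply_eq_apply_of_bounded hbdd z 0]⟩

end Liouville

section SigmaPair

/-- The expression `σ(x+y) σ(x-y)`, proportional to `℘(y) - ℘(x)`, in terms of which the
three-term identity of the sigma function has the form of a Plücker relation. -/
def sigmaPair (x y : ℂ) : ℂ := L.sigma (x + y) * L.sigma (x - y)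

theorem sigmaPair_swap (x y : ℂ) : L.sigmaPair y x = -L.sigmaPair x y := by
  rw [sigmaPair, sigmaPair, ← neg_sub x y, sigma_neg, add_comm y x, mul_neg]

theorem sigmaPair_neg_left (x y : ℂ) : L.sigmaPair (-x) y = L.sigmaPair x y := by
  rw [sigmaPair, sigmaPair, ← sub_eq_neg_add, ← neg_add', ← neg_sub x y, sigma_neg, sigma_neg]
  ring

theorem sigmaPair_eq_zero_iff {x y : ℂ} : L.sigmaPair x y = 0 ↔ L.mem (x + y) ∨ L.mem (x - y) := by
  rw [sigmaPair, mul_eq_zero, sigma_eq_zero_iff, sigma_eq_zero_iff]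

theorem exists_sigmaPair_add_left {l : ℂ} (hl : L.mem l) :
    ∃ m : ℂ → ℂ, ∀ x y, L.sigmaPair (x + l) y = m x * L.sigmaPair x y := by
  obtain ⟨c, η, -, h⟩ := L.exists_sigma_add hl
  refine ⟨fun x => c ^ 2 * (Complex.exp (η * (x + x))), fun x y => ?_⟩
  have hexp : Complex.exp (η * (x + x)) =
      Complex.exp (η * (x + y)) * Complex.exp (η * (x - y)) := by
    rw [← Complex.exp_add]
    ring_nf
  rw [sigmaPair, add_right_comm, add_sub_right_comm, h, h, sigmaPair]
  linear_combination (-c ^ 2 * L.sigma (x + y) * L.sigma (x - y)) * hexp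

theorem hasDerivAt_sigmaPair_left (x y : ℂ) :
    HasDerivAt (fun x => L.sigmaPair x y)
      (deriv L.sigma (x + y) * L.sigma (x - y) + L.sigma (x + y) * deriv L.sigma (x - y)) x :=
  ((L.differentiable_sigma (x + y)).hasDerivAt.comp_add_const x y).mul
    ((L.differentiable_sigma (x - y)).hasDerivAt.comp_sub_const x y)

theorem differentiable_sigmaPair_left (y : ℂ) : Differentiable ℂ fun x => L.sigmaPair x y :=
  fun x => (L.hasDerivAt_sigmaPair_left x y).differentiableAt

theorem deriv_sigmaPair_left_ne_zero {x y : ℂ} (hy : ¬ L.mem (y + y)) (h : L.sigmaPair x y = 0) :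
    deriv (fun x => L.sigmaPair x y) x ≠ 0 := by
  have hsub : (x + y) - (x - y) = y + y := by ring
  have hnot : ¬ (L.mem (x + y) ∧ L.mem (x - y)) := fun ⟨hp, hm⟩ => hy <| by
    rw [mem_iff_mem_lattice] at hp hm ⊢
    exact hsub ▸ sub_mem hp hm
  simp only [← sigma_eq_zero_iff] at hnot
  rw [(L.hasDerivAt_sigmaPair_left x y).deriv]
  rcases mul_eq_zero.mp h with hp | hm
  · simpa [hp] using ⟨L.deriv_sigma_ne_zero hp, fun hm => hnot ⟨hp, hm⟩⟩
  · simpa [hm] using ⟨fun hp => hnot ⟨hp, hm⟩, L.deriv_sigma_ne_zero hm⟩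

/-- As a function of `x` the last two terms vanish at `x = ± y`, hence are a constant multiple of
`L.sigmaPair x y`; the constant is found at `x = z`. -/
theorem sigmaPair_three_term_of_ne_zero {y z : ℂ} (hy : ¬ L.mem (y + y))
    (hyz : L.sigmaPair y z ≠ 0) (x w : ℂ) :
    L.sigmaPair x y * L.sigmaPair z w + L.sigmaPair y z * L.sigmaPair x w +
      L.sigmaPair z x * L.sigmaPair y w = 0 := by
  let f x := L.sigmaPair y z * L.sigmaPair x w - L.sigmaPair x z * L.sigmaPair y w
  have hf_mul {l : ℂ} (hl : L.mem l) : ∃ m : ℂ → ℂ, ∀ x,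
      f (x + l) = m x * f x ∧ L.sigmaPair (x + l) y = m x * L.sigmaPair x y := by
    obtain ⟨m, hm⟩ := L.exists_sigmaPair_add_left hl
    refine ⟨m, fun x => ⟨?_, hm x y⟩⟩
    simp only [f, hm]
    ring
  have hf_zero (x : ℂ) (hx : L.sigmaPair x y = 0) : f x = 0 := by
    have hfy : f y = 0 := by simp only [f]; ring
    have hfy' : f (-y) = 0 := by simp only [f, sigmaPair_neg_left]; ring
    rcases L.sigmaPair_eq_zero_iff.mp hx with hl | hl <;> obtain ⟨m, hm⟩ := hf_mul hl
    · simpa [hfy'] using (hm (-y)).1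
    · simpa [hfy] using (hm y).1
  obtain ⟨c, hc⟩ := L.exists_eq_const_mul_of_add_eq_mul (f := f)
    (((L.differentiable_sigmaPair_left w).const_mul _).sub
      ((L.differentiable_sigmaPair_left z).mul_const _))
    (L.differentiable_sigmaPair_left y)
    (fun x hx => ⟨hf_zero x hx, L.deriv_sigmaPair_left_ne_zero hy hx⟩) fun l hl => hf_mul hl
  have hzz : L.sigmaPair z z = 0 := by simp [sigmaPair, sigma_zero]
  have hcz : c = -L.sigmaPair z w := mul_left_cancel₀ hyz <| by
    have := hc z
    simp only [f, hzz, L.sigmaPair_swap y z] at this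
    linear_combination this
  have := hc x
  simp only [f, hcz] at this
  rw [L.sigmaPair_swap x z]
  linear_combination this

theorem sigmaPair_three_term (x y z w : ℂ) :
    L.sigmaPair x y * L.sigmaPair z w + L.sigmaPair y z * L.sigmaPair x w +
      L.sigmaPair z x * L.sigmaPair y w = 0 := by
  have hcount {f : ℂ → ℂ} (hf : f.Injective) : {y | L.mem (f y)}.Countable :=
    L.countable_setOf_mem.preimage hf
  have hdense := (((hcount fun a b (h : a + a = b + b) => by linear_combination h / 2).union
    (hcount (add_left_injective z))).union (hcount (sub_left_injective (b := z)))).dense_compl ℝ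
  have hcont : Continuous L.sigma := L.differentiable_sigma.continuous
  refine congrFun (Continuous.ext_on (f := fun y => L.sigmaPair x y * L.sigmaPair z w +
    L.sigmaPair y z * L.sigmaPair x w + L.sigmaPair z x * L.sigmaPair y w) hdense
    (by unfold sigmaPair; fun_prop) continuous_zero fun y hy => ?_) y
  simp only [Set.mem_compl_iff, Set.mem_union, Set.mem_ofPred_eq, not_or] at hy
  exact L.sigmaPair_three_term_of_ne_zero hy.1.1
    (L.sigmaPair_eq_zero_iff.not.mpr (not_or.mpr ⟨hy.1.2, hy.2⟩)) x w

theorem sigma_three_term (ξ δ κ κ' : ℂ) :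
    L.sigma (ξ + κ + κ') * L.sigma (δ + κ') * L.sigma (ξ + δ) * L.sigma κ =
      L.sigma (ξ + δ + κ') * L.sigma (ξ + κ) * L.sigma (κ + κ') * L.sigma δ -
        L.sigma (ξ + δ + κ + κ') * L.sigma (δ - κ) * L.sigma ξ * L.sigma κ' := by
  have h := L.sigmaPair_three_term (ξ + (δ + κ + κ') / 2) ((δ - κ + κ') / 2) ((δ + κ + κ') / 2)
    ((κ + κ' - δ) / 2)
  have hκ := L.sigma_neg κ
  have hξ := L.sigma_neg ξ
  simp only [sigmaPair] at h
  ring_nf at h hκ hξ ⊢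
  rw [hκ, hξ] at h
  linear_combination -h

end SigmaPair

section AdditionFormulas

/-- The three-term identity differentiated in `κ'` at `κ' = 0`. -/
theorem sigma_three_term_deriv (ξ δ κ : ℂ) :
    (deriv L.sigma (ξ + κ) * L.sigma δ + L.sigma (ξ + κ) * deriv L.sigma δ) * L.sigma (ξ + δ) *
        L.sigma κ =
      (deriv L.sigma (ξ + δ) * L.sigma κ + L.sigma (ξ + δ) * deriv L.sigma κ) * L.sigma (ξ + κ) *
        L.sigma δ - L.sigma (ξ + δ + κ) * L.sigma (δ - κ) * L.sigma ξ := by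
  have hσ (a : ℂ) : HasDerivAt (fun κ' => L.sigma (a + κ')) (deriv L.sigma a) 0 := by
    simpa using (L.differentiable_sigma (a + 0)).hasDerivAt.comp_const_add a 0
  have hσ0 : HasDerivAt L.sigma 1 0 := by
    simpa [iteratedDeriv_one_sigma_zero] using L.hasDerivAt_iteratedDeriv_sigma 0 0
  have hleft := (((hσ (ξ + κ)).mul (hσ δ)).mul_const (L.sigma (ξ + δ))).mul_const (L.sigma κ)
  have hright := ((((hσ (ξ + δ)).mul_const (L.sigma (ξ + κ))).mul (hσ κ)).mul_const
    (L.sigma δ)).sub ((((hσ (ξ + δ + κ)).mul_const (L.sigma (δ - κ))).mul_const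
    (L.sigma ξ)).mul hσ0)
  have := hleft.unique (hright.congr_of_eventuallyEq
    (.of_forall fun κ' => L.sigma_three_term ξ δ κ κ'))
  simp only [add_zero, sigma_zero, mul_zero, zero_add] at this
  linear_combination this

theorem wp_eq {z : ℂ} (hz : ¬ L.mem z) :
    L.wp z = L.zeta z ^ 2 - iteratedDeriv 2 L.sigma z / L.sigma z := by
  have hσ := L.sigma_eq_zero_iff.not.mpr hz
  have hderiv := (L.hasDerivAt_iteratedDeriv_sigma 1 z).div
    (L.hasDerivAt_iteratedDeriv_sigma 0 z) (by simpa using hσ)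
  simp only [iteratedDeriv_one, iteratedDeriv_zero, zero_add] at hderiv
  rw [wp, show deriv L.zeta z = _ from hderiv.deriv, zeta]
  field_simp
  ring

/-- The differentiated three-term identity, differentiated twice more in `κ` at `κ = 0`. -/
theorem sigma_three_term_iteratedDeriv (x y : ℂ) :
    L.sigma (x + y) * L.sigma y * iteratedDeriv 2 L.sigma x +
      2 * (L.sigma (x + y) * deriv L.sigma y - deriv L.sigma (x + y) * L.sigma y) *
        deriv L.sigma x +
      L.sigma x * (iteratedDeriv 2 L.sigma (x + y) * L.sigma y -
        2 * deriv L.sigma (x + y) * deriv L.sigma y +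
        L.sigma (x + y) * iteratedDeriv 2 L.sigma y) = 0 := by
  let S := fun k => iteratedDeriv k L.sigma
  have hS (k : ℕ) (z : ℂ) : HasDerivAt (S k) (S (k + 1) z) z := L.hasDerivAt_iteratedDeriv_sigma k z
  have hadd (k : ℕ) (a κ : ℂ) : HasDerivAt (fun κ => S k (a + κ)) (S (k + 1) (a + κ)) κ :=
    (hS k (a + κ)).comp_const_add a κ
  have hsub (k : ℕ) (a κ : ℂ) : HasDerivAt (fun κ => S k (a - κ)) (-S (k + 1) (a - κ)) κ :=
    (hS k (a - κ)).comp_const_sub a κ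
  let A := S 0 (x + y) * S 0 y
  let B := S 0 (x + y) * S 1 y - S 1 (x + y) * S 0 y
  have hzero (κ : ℂ) : (A * S 1 (x + κ) + B * S 0 (x + κ)) * S 0 κ - A * S 0 (x + κ) * S 1 κ +
      S 0 x * (S 0 (x + y + κ) * S 0 (y - κ)) = 0 := by
    simp only [A, B, S, iteratedDeriv_one, iteratedDeriv_zero]
    linear_combination L.sigma_three_term_deriv x y κ
  have hderiv (κ : ℂ) : (A * S 2 (x + κ) + B * S 1 (x + κ)) * S 0 κ + B * S 0 (x + κ) * S 1 κ -
      A * S 0 (x + κ) * S 2 κ +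
      S 0 x * (S 1 (x + y + κ) * S 0 (y - κ) - S 0 (x + y + κ) * S 1 (y - κ)) = 0 := by
    have := ((((((hadd 1 x κ).const_mul A).add ((hadd 0 x κ).const_mul B)).mul (hS 0 κ)).sub
      (((hadd 0 x κ).const_mul A).mul (hS 1 κ))).add
      (((hadd 0 (x + y) κ).mul (hsub 0 y κ)).const_mul (S 0 x))).unique
      ((hasDerivAt_const κ (0 : ℂ)).congr_of_eventuallyEq (.of_forall hzero))
    simp only [Pi.add_apply] at this
    linear_combination this
  have := ((((((hadd 2 x 0).const_mul A).add ((hadd 1 x 0).const_mul B)).mul (hS 0 0)).add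
    (((hadd 0 x 0).const_mul B).mul (hS 1 0))).sub (((hadd 0 x 0).const_mul A).mul (hS 2 0))).add
    ((((hadd 1 (x + y) 0).mul (hsub 0 y 0)).sub
      ((hadd 0 (x + y) 0).mul (hsub 1 y 0))).const_mul (S 0 x)) |>.unique
    ((hasDerivAt_const 0 (0 : ℂ)).congr_of_eventuallyEq (.of_forall hderiv))
  simp only [Pi.add_apply, S, A, B, add_zero, sub_zero, zero_add, Nat.reduceAdd,
    iteratedDeriv_zero, sigma_zero, iteratedDeriv_one_sigma_zero, iteratedDeriv_two_sigma_zero,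
    iteratedDeriv_three_sigma_zero] at this
  simp only [iteratedDeriv_one] at this
  linear_combination this

theorem zeta_add_sub_sub_sq {x y : ℂ} (hx : ¬ L.mem x) (hy : ¬ L.mem y) (hxy : ¬ L.mem (x + y)) :
    (L.zeta (x + y) - L.zeta x - L.zeta y) ^ 2 = L.wp (x + y) + L.wp x + L.wp y := by
  have h := L.sigma_three_term_iteratedDeriv x y
  rw [L.wp_eq hx, L.wp_eq hy, L.wp_eq hxy]
  rw [← sigma_eq_zero_iff] at hx hy hxy
  simp only [zeta]
  field_simp
  linear_combination (L.sigma x * L.sigma y * L.sigma (x + y)) * h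

theorem Phi_add_mul_Phi {ξ δ κ κ' : ℂ} (hξ : ¬ L.mem ξ) (hδ : ¬ L.mem δ) (hκ : ¬ L.mem κ)
    (hκ' : ¬ L.mem κ') (hξδ : ¬ L.mem (ξ + δ)) (hκκ' : ¬ L.mem (κ + κ')) :
    L.Phi ξ (κ + κ') * L.Phi δ κ' =
      L.Phi (ξ + δ) (κ + κ') * L.Phi δ (-κ) + L.Phi (ξ + δ) κ' * L.Phi ξ κ := by
  simp only [Phi, sigma_neg, ← sub_eq_add_neg, ← add_assoc]
  rw [← sigma_eq_zero_iff] at *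
  field_simp
  linear_combination L.sigma_three_term ξ δ κ κ'

theorem Phi_add_mul_Phi_neg {ξ δ κ : ℂ} (hξ : ¬ L.mem ξ) (hδ : ¬ L.mem δ) (hκ : ¬ L.mem κ)
    (hξδ : ¬ L.mem (ξ + δ)) (hξκ : ¬ L.mem (ξ + κ)) :
    L.Phi (ξ + δ) κ * L.Phi δ (-κ) =
      (L.zeta (ξ + κ) - L.zeta κ - L.zeta (ξ + δ) + L.zeta δ) * L.Phi ξ κ := by
  simp only [Phi, sigma_neg, ← sub_eq_add_neg, zeta]
  rw [← sigma_eq_zero_iff] at *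
  field_simp
  linear_combination -L.sigma_three_term_deriv ξ δ κ

end AdditionFormulas

section KroneckerFunction

theorem Phi_neg_neg (ξ κ : ℂ) : L.Phi (-ξ) (-κ) = -L.Phi ξ κ := by
  rw [Phi, Phi, ← neg_add, sigma_neg, sigma_neg, sigma_neg, neg_mul_neg, neg_div]

theorem exp_mul_Psi (ξ κ : ℂ) : Complex.exp (L.zeta ξ * κ) * L.Psi ξ κ = L.Phi ξ κ := by
  rw [Psi, mul_left_comm, ← Complex.exp_add]
  simp

theorem Phi_ne_zero {ξ κ : ℂ} (hξ : ¬ L.mem ξ) (hκ : ¬ L.mem κ) (hξκ : ¬ L.mem (ξ + κ)) :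
    L.Phi ξ κ ≠ 0 := by
  rw [← sigma_eq_zero_iff] at hξ hκ hξκ
  exact div_ne_zero hξκ (mul_ne_zero hξ hκ)

end KroneckerFunction

end EllLattice

namespace KPData

variable {N N' : ℕ} (D : KPData N N')

section Nondegeneracy

/-- Nondegeneracy of the parameters: the points listed here, at which a sigma function in a
denominator vanishes or a zeta function has a pole if they are periods, lie outside `Λ`. -/
structure Nondegenerate : Prop where
  xi (n m h : ℤ) : ¬ D.L.mem (D.xi n m h)
  xi_add_κ (n m h : ℤ) (i : Fin N) : ¬ D.L.mem (D.xi n m h + D.κ i)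
  xi_add_κ' (n m h : ℤ) (j : Fin N') : ¬ D.L.mem (D.xi n m h + D.κ' j)
  κ (i : Fin N) : ¬ D.L.mem (D.κ i)
  κ' (j : Fin N') : ¬ D.L.mem (D.κ' j)
  κ_add_κ' (i : Fin N) (j : Fin N') : ¬ D.L.mem (D.κ i + D.κ' j)
  step (d : ℂ) (hd : d ∈ ({D.del, D.eps, D.lam} : Set ℂ)) : ¬ D.L.mem d
  step_sub_κ (d : ℂ) (hd : d ∈ ({D.del, D.eps, D.lam} : Set ℂ)) (i : Fin N) :
    ¬ D.L.mem (d - D.κ i)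
  step_add_κ' (d : ℂ) (hd : d ∈ ({D.del, D.eps, D.lam} : Set ℂ)) (j : Fin N') :
    ¬ D.L.mem (d + D.κ' j)

end Nondegeneracy

section PlaneWaves

/-- The plane-wave factor `ρ_i` without its exponential `e^{ζ(ξ)κ_i}`. -/
def bareρ (i : Fin N) (n m h : ℤ) : ℂ :=
  D.L.Phi D.del (-D.κ i) ^ n * D.L.Phi D.eps (-D.κ i) ^ m * D.L.Phi D.lam (-D.κ i) ^ h * D.ρ0 i

/-- The plane-wave factor `ν_j` without its exponential `e^{ζ(ξ)κ'_j}`. -/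
def bareν (j : Fin N') (n m h : ℤ) : ℂ :=
  D.L.Phi D.del (D.κ' j) ^ (-n) * D.L.Phi D.eps (D.κ' j) ^ (-m) *
    D.L.Phi D.lam (D.κ' j) ^ (-h) * D.ν0 j

/-- The linear term `nζ(δ) + mζ(ε) + hζ(λ)` of the potential `w`. -/
def phase (n m h : ℤ) : ℂ := n • D.L.zeta D.del + m • D.L.zeta D.eps + h • D.L.zeta D.lam

variable {D} {n m h n' m' h' : ℤ}

theorem ρ_eq_bareρ_mul_exp (i : Fin N) :
    D.ρ i n m h = D.bareρ i n m h * Complex.exp (D.L.zeta (D.xi n m h) * D.κ i) := by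
  have hPhi (d : ℂ) : Complex.exp (-(D.L.zeta d) * D.κ i) * D.L.Psi d (-(D.κ i)) =
      D.L.Phi d (-D.κ i) := by
    rw [← D.L.exp_mul_Psi, neg_mul, mul_neg]
  rw [ρ, bareρ, hPhi, hPhi, hPhi, mul_right_comm]

theorem ν_eq_bareν_mul_exp (j : Fin N') :
    D.ν j n m h = D.bareν j n m h * Complex.exp (D.L.zeta (D.xi n m h) * D.κ' j) := by
  simp only [ν, bareν, D.L.exp_mul_Psi, mul_right_comm]

theorem r_apply (i : Fin N) : D.r n m h i = D.bareρ i n m h * D.L.Phi (D.xi n m h) (D.κ i) := by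
  rw [r, ρ_eq_bareρ_mul_exp, mul_assoc, D.L.exp_mul_Psi]

theorem s_apply (j : Fin N') :
    D.s n m h j = D.bareν j n m h * D.L.Phi (D.xi n m h) (D.κ' j) := by
  rw [s, ν_eq_bareν_mul_exp, mul_assoc, D.L.exp_mul_Psi]

theorem M_apply (i : Fin N) (j : Fin N') :
    D.M n m h i j =
      D.bareρ i n m h * D.L.Phi (D.xi n m h) (D.κ i + D.κ' j) * D.bareν j n m h := by
  rw [M, of_apply, ρ_eq_bareρ_mul_exp, ν_eq_bareν_mul_exp, ← D.L.exp_mul_Psi, mul_add,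
    Complex.exp_add]
  ring

variable (D) in
/-- The site `(n', m', h')` arises from `(n, m, h)` by the elementary lattice shift with
parameter `d`, one of `δ`, `ε`, `λ`. -/
structure IsShift (d : ℂ) (n m h n' m' h' : ℤ) : Prop where
  not_mem : ¬ D.L.mem d
  xi : D.xi n' m' h' = D.xi n m h + d
  phase : D.phase n' m' h' = D.phase n m h + D.L.zeta d
  bareρ (i : Fin N) : D.bareρ i n' m' h' = D.bareρ i n m h * D.L.Phi d (-D.κ i)
  bareν (j : Fin N') : D.bareν j n m h = D.bareν j n' m' h' * D.L.Phi d (D.κ' j)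

namespace Nondegenerate

theorem Phi_step_neg_κ_ne_zero (hD : D.Nondegenerate) {d : ℂ}
    (hd : d ∈ ({D.del, D.eps, D.lam} : Set ℂ)) (i : Fin N) : D.L.Phi d (-D.κ i) ≠ 0 :=
  D.L.Phi_ne_zero (hD.step d hd) (D.L.mem_neg_iff.not.mpr (hD.κ i))
    (sub_eq_add_neg d _ ▸ hD.step_sub_κ d hd i)

theorem Phi_step_κ'_ne_zero (hD : D.Nondegenerate) {d : ℂ}
    (hd : d ∈ ({D.del, D.eps, D.lam} : Set ℂ)) (j : Fin N') : D.L.Phi d (D.κ' j) ≠ 0 :=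
  D.L.Phi_ne_zero (hD.step d hd) (hD.κ' j) (hD.step_add_κ' d hd j)

theorem isShift_del (hD : D.Nondegenerate) (n m h : ℤ) :
    D.IsShift D.del n m h (n + 1) m h where
  not_mem := hD.step D.del (by simp)
  xi := by simp only [KPData.xi, add_smul, one_smul]; ring
  phase := by simp only [KPData.phase, add_smul, one_smul]; ring
  bareρ i := by
    rw [KPData.bareρ, zpow_add_one₀ (hD.Phi_step_neg_κ_ne_zero (by simp) i), KPData.bareρ]
    ring
  bareν j := by
    rw [KPData.bareν, ← sub_add_cancel (-n) 1, ← neg_add',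
      zpow_add_one₀ (hD.Phi_step_κ'_ne_zero (by simp) j), KPData.bareν]
    ring

theorem isShift_eps (hD : D.Nondegenerate) (n m h : ℤ) :
    D.IsShift D.eps n m h n (m + 1) h where
  not_mem := hD.step D.eps (by simp)
  xi := by simp only [KPData.xi, add_smul, one_smul]; ring
  phase := by simp only [KPData.phase, add_smul, one_smul]; ring
  bareρ i := by
    rw [KPData.bareρ, zpow_add_one₀ (hD.Phi_step_neg_κ_ne_zero (by simp) i), KPData.bareρ]
    ring
  bareν j := by
    rw [KPData.bareν, ← sub_add_cancel (-m) 1, ← neg_add',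
      zpow_add_one₀ (hD.Phi_step_κ'_ne_zero (by simp) j), KPData.bareν]
    ring

theorem isShift_lam (hD : D.Nondegenerate) (n m h : ℤ) :
    D.IsShift D.lam n m h n m (h + 1) where
  not_mem := hD.step D.lam (by simp)
  xi := by simp only [KPData.xi, add_smul, one_smul]; ring
  phase := by simp only [KPData.phase, add_smul, one_smul]; ring
  bareρ i := by
    rw [KPData.bareρ, zpow_add_one₀ (hD.Phi_step_neg_κ_ne_zero (by simp) i), KPData.bareρ]
    ring
  bareν j := by
    rw [KPData.bareν, ← sub_add_cancel (-h) 1, ← neg_add',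
      zpow_add_one₀ (hD.Phi_step_κ'_ne_zero (by simp) j), KPData.bareν]
    ring

end Nondegenerate

end PlaneWaves

section Potentials

/-- The vector `((ζ(ξ+κ_i) - ζ(κ_i)) r_i)_i`. -/
def zetaR (n m h : ℤ) : Fin N → ℂ :=
  fun i => (D.L.zeta (D.xi n m h + D.κ i) - D.L.zeta (D.κ i)) * D.r n m h i

/-- The vector `((ζ(ξ+κ'_j) - ζ(κ'_j)) s_j)_j`. -/
def zetaS (n m h : ℤ) : Fin N' → ℂ :=
  fun j => (D.L.zeta (D.xi n m h + D.κ' j) - D.L.zeta (D.κ' j)) * D.s n m h j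

/-- The companion `sᵀ C (1+MC)⁻¹ (ζ(ξ+K) - ζ(K)) r` of `w₀`. -/
def w0R (n m h : ℤ) : ℂ :=
  D.s n m h ⬝ᵥ (D.C *ᵥ ((1 + D.M n m h * D.C)⁻¹ *ᵥ D.zetaR n m h))

/-- The companion `sᵀ (ζ(ξ+K') - ζ(K')) C (1+MC)⁻¹ r` of `w₀`. -/
def w0S (n m h : ℤ) : ℂ := D.zetaS n m h ⬝ᵥ (D.C *ᵥ D.u0 n m h)

variable {D} {d : ℂ} {n m h n' m' h' : ℤ}

namespace IsShift

theorem M_eq_sub_vecMulVec (hd : D.IsShift d n m h n' m' h') (hD : D.Nondegenerate) :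
    D.M n' m' h' = D.M n m h - vecMulVec (D.r n m h) (D.s n' m' h') := by
  ext i j
  have hPhi := D.L.Phi_add_mul_Phi (hD.xi n m h) hd.not_mem (hD.κ i) (hD.κ' j)
    (hd.xi ▸ hD.xi n' m' h') (hD.κ_add_κ' i j)
  rw [← hd.xi] at hPhi
  rw [Matrix.sub_apply, vecMulVec_apply, M_apply, M_apply, r_apply, s_apply, hd.bareρ, hd.bareν]
  linear_combination -(D.bareρ i n m h * D.bareν j n' m' h') * hPhi

theorem r_eq (hd : D.IsShift d n m h n' m' h') (hD : D.Nondegenerate) :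
    D.r n' m' h' =
      D.zetaR n m h - (D.L.zeta (D.xi n' m' h') - D.L.zeta d) • D.r n m h := by
  ext i
  have hPhi := D.L.Phi_add_mul_Phi_neg (hD.xi n m h) hd.not_mem (hD.κ i)
    (hd.xi ▸ hD.xi n' m' h') (hD.xi_add_κ n m h i)
  rw [← hd.xi] at hPhi
  rw [Pi.sub_apply, Pi.smul_apply, smul_eq_mul, zetaR, r_apply, r_apply, hd.bareρ]
  linear_combination D.bareρ i n m h * hPhi

theorem s_eq (hd : D.IsShift d n m h n' m' h') (hD : D.Nondegenerate) :
    D.s n m h =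
      (D.L.zeta (D.xi n m h) + D.L.zeta d) • D.s n' m' h' - D.zetaS n' m' h' := by
  ext j
  have hxi : D.xi n m h = D.xi n' m' h' + -d := by rw [hd.xi, add_neg_cancel_right]
  have hPhi := D.L.Phi_add_mul_Phi_neg (hD.xi n' m' h') (D.L.mem_neg_iff.not.mpr hd.not_mem)
    (hD.κ' j) (hxi ▸ hD.xi n m h) (hD.xi_add_κ' n' m' h' j)
  rw [← hxi, D.L.Phi_neg_neg, D.L.zeta_neg] at hPhi
  rw [Pi.sub_apply, Pi.smul_apply, smul_eq_mul, zetaS, s_apply, s_apply, hd.bareν]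
  linear_combination -D.bareν j n' m' h' * hPhi

theorem u0_eq (hd : D.IsShift d n m h n' m' h') (hD : D.Nondegenerate)
    (hInv : IsUnit (1 + D.M n m h * D.C).det) (hInv' : IsUnit (1 + D.M n' m' h' * D.C).det) :
    D.u0 n' m' h' = (1 + D.M n m h * D.C)⁻¹ *ᵥ D.zetaR n m h -
      (D.L.zeta (D.xi n' m' h') - D.L.zeta d - D.w0 n' m' h') • D.u0 n m h := by
  have hT : 1 + D.M n' m' h' * D.C =
      (1 + D.M n m h * D.C) - vecMulVec (D.r n m h) (D.s n' m' h' ᵥ* D.C) := by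
    rw [hd.M_eq_sub_vecMulVec hD, Matrix.sub_mul, vecMulVec_mul, add_sub_assoc]
  have h := inv_mulVec_of_eq_sub_vecMulVec hInv hInv' hT (D.r n' m' h')
  rw [← dotProduct_mulVec] at h
  nth_rw 2 [hd.r_eq hD] at h
  rw [mulVec_sub, mulVec_smul] at h
  rw [sub_smul _ (D.w0 n' m' h'), ← sub_add]
  exact h

/-- The scalar `sᵀ C u₀'`, with `u₀'` at the shifted site, is computed in two ways: by expressing
`s` through the shifted site, or `u₀'` through the original one. -/
theorem w0S_add_w0R (hd : D.IsShift d n m h n' m' h') (hD : D.Nondegenerate)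
    (hInv : IsUnit (1 + D.M n m h * D.C).det) (hInv' : IsUnit (1 + D.M n' m' h' * D.C).det) :
    D.w0S n' m' h' + D.w0R n m h =
      (D.L.zeta (D.xi n m h) + D.L.zeta d) * D.w0 n' m' h' +
        (D.L.zeta (D.xi n' m' h') - D.L.zeta d) * D.w0 n m h - D.w0 n m h * D.w0 n' m' h' := by
  have hs : D.s n m h ⬝ᵥ (D.C *ᵥ D.u0 n' m' h') =
      (D.L.zeta (D.xi n m h) + D.L.zeta d) * D.w0 n' m' h' - D.w0S n' m' h' := by
    rw [hd.s_eq hD, sub_dotProduct, smul_dotProduct]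
    rfl
  have hu : D.s n m h ⬝ᵥ (D.C *ᵥ D.u0 n' m' h') = D.w0R n m h -
      (D.L.zeta (D.xi n' m' h') - D.L.zeta d - D.w0 n' m' h') * D.w0 n m h := by
    rw [hd.u0_eq hD hInv hInv', mulVec_sub, mulVec_smul, dotProduct_sub, dotProduct_smul]
    rfl
  linear_combination hs - hu

end IsShift

end Potentials

section BilinearRelation

variable {D} {d : ℂ} {n m h n' m' h' : ℤ}

theorem w_eq (n m h : ℤ) : D.w n m h = D.L.zeta (D.xi n m h) - D.phase n m h - D.w0 n m h := by
  rw [w, phase]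
  ring

variable (D) in
/-- The contribution `½((ζ(ξ) - nζ(δ) - mζ(ε) - hζ(λ))² - ℘(ξ))` of the zero-soliton solution to
the potentials `potentialA` and `potentialB`. -/
def seedPotential (n m h : ℤ) : ℂ :=
  ((D.L.zeta (D.xi n m h) - D.phase n m h) ^ 2 - D.L.wp (D.xi n m h)) / 2

variable (D) in
/-- The potential paired, at the end point of a lattice shift, with `potentialB` at its starting
point; their sum is `w w'` up to a constant depending only on the shift. -/
def potentialA (n m h : ℤ) : ℂ :=
  D.seedPotential n m h - D.w0S n m h + D.phase n m h * D.w0 n m h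

variable (D) in
/-- The potential paired, at the starting point of a lattice shift, with `potentialA` at its end
point. -/
def potentialB (n m h : ℤ) : ℂ :=
  D.seedPotential n m h - D.w0R n m h + D.phase n m h * D.w0 n m h

theorem IsShift.potentialA_add_potentialB (hd : D.IsShift d n m h n' m' h')
    (hD : D.Nondegenerate) (hInv : IsUnit (1 + D.M n m h * D.C).det)
    (hInv' : IsUnit (1 + D.M n' m' h' * D.C).det) :
    D.potentialA n' m' h' + D.potentialB n m h = D.w n m h * D.w n' m' h' + D.L.wp d / 2 := by
  have hsoliton := hd.w0S_add_w0R hD hInv hInv'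
  have hseed := D.L.zeta_add_sub_sub_sq (hD.xi n m h) hd.not_mem (hd.xi ▸ hD.xi n' m' h')
  rw [← hd.xi] at hseed
  rw [potentialA, potentialB, seedPotential, seedPotential, w_eq, w_eq, hd.phase]
  linear_combination hseed / 2 - hsoliton

end BilinearRelation

section Genericity

variable {D} {d : ℂ}

theorem exists_smul_eq_of_mem_steps (hd : d ∈ ({D.del, D.eps, D.lam} : Set ℂ)) :
    ∃ a b c : ℤ, ¬ (a = 0 ∧ b = 0 ∧ c = 0) ∧ d = a • D.del + b • D.eps + c • D.lam := by
  rcases hd with rfl | rfl | rfl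
  · exact ⟨1, 0, 0, by simp⟩
  · exact ⟨0, 1, 0, by simp⟩
  · exact ⟨0, 0, 1, by simp⟩

theorem Generic.nondegenerate (hgen : D.Generic ![]) : D.Nondegenerate where
  xi n m h hmem := hgen 1 n m h 0 0 0 (by simp) (by simpa [KPData.xi] using hmem)
  xi_add_κ n m h i hmem := hgen 1 n m h (Pi.single i 1) 0 0 (by simp)
    (by simpa [KPData.xi, Pi.single_apply] using hmem)
  xi_add_κ' n m h j hmem := hgen 1 n m h 0 (Pi.single j 1) 0 (by simp)
    (by simpa [KPData.xi, Pi.single_apply] using hmem)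
  κ i hmem := hgen 0 0 0 0 (Pi.single i 1) 0 0 (by simp)
    (by simpa [Pi.single_apply] using hmem)
  κ' j hmem := hgen 0 0 0 0 0 (Pi.single j 1) 0 (by simp)
    (by simpa [Pi.single_apply] using hmem)
  κ_add_κ' i j hmem := hgen 0 0 0 0 (Pi.single i 1) (Pi.single j 1) 0 (by simp)
    (by simpa [Pi.single_apply] using hmem)
  step d hd hmem := by
    obtain ⟨a, b, c, habc, rfl⟩ := exists_smul_eq_of_mem_steps hd
    exact hgen 0 a b c 0 0 0 (by simpa using habc) (by simpa using hmem)
  step_sub_κ d hd i hmem := by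
    obtain ⟨a, b, c, -, rfl⟩ := exists_smul_eq_of_mem_steps hd
    exact hgen 0 a b c (-Pi.single i 1) 0 0 (by simp)
      (by simpa [Pi.single_apply, sub_eq_add_neg] using hmem)
  step_add_κ' d hd j hmem := by
    obtain ⟨a, b, c, -, rfl⟩ := exists_smul_eq_of_mem_steps hd
    exact hgen 0 a b c 0 (Pi.single j 1) 0 (by simp)
      (by simpa [Pi.single_apply] using hmem)

end Genericity

end KPData

theorem elliptic_soliton_lattice_KP_general {N N' : ℕ} (D : KPData N N')
    (hD : D.Nondegenerate) (hInv : ∀ n m h : ℤ, IsUnit (1 + D.M n m h * D.C).det) (n m h : ℤ) :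
    (D.w n (m + 1) (h + 1) - D.w (n + 1) m (h + 1)) * (D.w n m (h + 1) - D.w (n + 1) m h) =
      (D.w n (m + 1) (h + 1) - D.w (n + 1) (m + 1) h) * (D.w n (m + 1) h - D.w (n + 1) m h) := by
  have hshift {d : ℂ} {n m h n' m' h' : ℤ} (hd : D.IsShift d n m h n' m' h') :=
    hd.potentialA_add_potentialB hD (hInv n m h) (hInv n' m' h')
  simpa using lattice_KP_of_add_eq_mul_add
    (w := fun p : ℤ × ℤ × ℤ => D.w p.1 p.2.1 p.2.2)
    (A := fun p => D.potentialA p.1 p.2.1 p.2.2) (B := fun p => D.potentialB p.1 p.2.1 p.2.2)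
    (e₁ := (1, 0, 0)) (e₂ := (0, 1, 0)) (e₃ := (0, 0, 1))
    (fun p => by simpa using hshift (hD.isShift_del p.1 p.2.1 p.2.2))
    (fun p => by simpa using hshift (hD.isShift_eps p.1 p.2.1 p.2.2))
    (fun p => by simpa using hshift (hD.isShift_lam p.1 p.2.1 p.2.2)) (n, m, h)

/-- Elliptic (N,N′)-soliton solution of the lattice (potential) KP equation:
`(ŵ̄ − w̃̄)(w̄ − w̃) = (ŵ̄ − ŵ̃)(ŵ − w̃)`. -/
theorem elliptic_soliton_lattice_KP {N N' : ℕ} (D : KPData N N')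
    (hρ0 : ∀ i, D.ρ0 i ≠ 0) (hν0 : ∀ j, D.ν0 j ≠ 0)
    (hgen : D.Generic ![])
    (hInv : ∀ n m h : ℤ, IsUnit ((1 + D.M n m h * D.C).det)) :
    ∀ n m h : ℤ,
      (D.w n (m + 1) (h + 1) - D.w (n + 1) m (h + 1)) *
          (D.w n m (h + 1) - D.w (n + 1) m h) =
        (D.w n (m + 1) (h + 1) - D.w (n + 1) (m + 1) h) *
          (D.w n (m + 1) h - D.w (n + 1) m h) :=
  elliptic_soliton_lattice_KP_general D hgen.nondegenerate hInv
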